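/- Let H be a separable complex Hilbert space and let p and q be orthogonal projections on H. Then the operator q p (1 - q) is Hilbert–Schmidt if and only if there exist an orthogonal projection e on H commuting with q p q and a trace-class operator t on H such that q p q = e + t. -/

import Mathlib

open scoped InnerProductSpace

/-- An orthogonal projection on a complex Hilbert space: a bounded operator `e`
with `e = e*` and `e = e²`. -/
def IsOrthogonalProjection {H : Type*} [NormedAddCommGroup H] [InnerProductSpace ℂ H]
    [CompleteSpace H] (e : H →L[ℂ] H) : Prop :=
  IsSelfAdjoint e ∧ e * e = e

/-- A bounded operator `T` on a Hilbert space is Hilbert–Schmidt if for some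
Hilbert (orthonormal) basis `(eᵢ)` the sum `Σᵢ ‖T eᵢ‖²` is finite. -/
def IsHilbertSchmidt {H : Type*} [NormedAddCommGroup H] [InnerProductSpace ℂ H]
    [CompleteSpace H] (T : H →L[ℂ] H) : Prop :=
  ∃ (ι : Type) (b : HilbertBasis ι ℂ H), Summable fun i => ‖T (b i)‖ ^ 2

/-- A bounded operator `T` on a Hilbert space is trace class if for some Hilbert
(orthonormal) basis `(eᵢ)` the sum `Σᵢ ⟨eᵢ, √(T*T) eᵢ⟩` is finite. -/
def IsTraceClass {H : Type*} [NormedAddCommGroup H] [InnerProductSpace ℂ H]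
    [CompleteSpace H] (T : H →L[ℂ] H) : Prop :=
  ∃ (ι : Type) (b : HilbertBasis ι ℂ H),
    Summable fun i => (⟪b i, (CFC.sqrt (star T * T)) (b i)⟫_ℂ).re

/-!
Put `a = q p q` and `T = q p (1 - q)`, so that `T T* = a - a²`. The sum of squares
`∑ᵢ ‖T eᵢ‖²` is the same for `T*`, hence `T` is Hilbert–Schmidt if and only if the positive
operator `a - a²` has finite trace.

Let `e` be a projection commuting with `a`. For self-adjoint `a`, the condition `a² ≤ a` says that
`0 ≤ a ≤ 1`. As with the numbers `0 ≤ a ≤ 1` and `e ∈ {0, 1}`, the absolute value `d = |a - e|`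
equals `(1 - 2e)(a - e)`, where `1 - 2e` is a symmetry, and `d - d² = a - a²`. Thus `a - a² ≤ d`
for every such `e`, while `d ≤ 2 (a - a²)` as soon as `d ≤ 1/2`. The latter holds if `e (2a - 1)`
is the positive part of `2a - 1`, because then `2d + |2a - 1| = 1`. The projection onto the kernel
of the negative part of `2a - 1` is such an `e`; it replaces the spectral projection
`χ_{[1/2, 1]}(a)` and needs no Borel functional calculus.
-/

section Ring

variable {R : Type*} [Ring R]

lemma one_sub_two_mul_mul_one_sub_two_mul {e : R} (he : IsIdempotentElem e) :
    (1 - 2 * e) * (1 - 2 * e) = 1 := by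
  simp only [mul_sub, sub_mul, two_mul, add_mul, mul_add, one_mul, mul_one, he.eq]
  abel

lemma one_sub_two_mul_mul_sub {a e : R} (he : IsIdempotentElem e) (hea : Commute e a) :
    (1 - 2 * e) * (a - e) = (a - a * a) + (a - e) * (a - e) := by
  simp only [mul_sub, sub_mul, two_mul, add_mul, one_mul, he.eq, hea.eq]
  abel

lemma isSelfAdjoint_two_mul_sub_one [StarRing R] {a : R} (ha : IsSelfAdjoint a) :
    IsSelfAdjoint (2 * a - 1) := by
  rw [two_mul]
  exact (ha.add ha).sub (.one R)

lemma mul_mul_one_sub_mul_star_self [StarRing R] {p q : R}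
    (hp : IsStarProjection p) (hq : IsStarProjection q) :
    q * p * (1 - q) * star (q * p * (1 - q)) = q * p * q - q * p * q * (q * p * q) := by
  have hstar : star (q * p * (1 - q)) = (1 - q) * (p * q) := by
    simp only [star_mul, hp.isSelfAdjoint.star_eq, hq.isSelfAdjoint.star_eq,
      hq.one_sub.isSelfAdjoint.star_eq]
  calc q * p * (1 - q) * star (q * p * (1 - q))
      = q * p * ((1 - q) * (1 - q)) * (p * q) := by rw [hstar]; simp only [mul_assoc]
    _ = q * (p * p) * q - q * p * (q * q) * p * q := by
      rw [hq.one_sub.isIdempotentElem.eq, hq.isIdempotentElem.eq]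
      noncomm_ring
    _ = q * p * q - q * p * q * (q * p * q) := by
      rw [hp.isIdempotentElem.eq]
      simp only [mul_assoc]

end Ring

section CStarAlgebra

variable {A : Type*} [CStarAlgebra A] [PartialOrder A] [StarOrderedRing A] {a e : A}

lemma cfcAbs_sub_eq_one_sub_two_mul_mul (ha : IsSelfAdjoint a) (haa : a * a ≤ a)
    (he : IsStarProjection e) (hea : Commute e a) :
    CFC.abs (a - e) = (1 - 2 * e) * (a - e) := by
  have hsub : IsSelfAdjoint (a - e) := ha.sub he.isSelfAdjoint
  have hcomm : Commute (a - e) (1 - 2 * e) := by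
    have hcomm' : Commute (a - e) e := hea.symm.sub_left (.refl e)
    exact (Commute.one_right _).sub_right ((Commute.ofNat_right _ 2).mul_right hcomm')
  refine CFC.sqrt_unique ?_ ?_
  · rw [hcomm.mul_mul_mul_comm, one_sub_two_mul_mul_one_sub_two_mul he.isIdempotentElem, one_mul,
      hsub.star_eq]
  · rw [one_sub_two_mul_mul_sub he.isIdempotentElem hea]
    exact add_nonneg (sub_nonneg.2 haa) hsub.mul_self_nonneg

lemma cfcAbs_sub_sub_mul_self (ha : IsSelfAdjoint a) (haa : a * a ≤ a)
    (he : IsStarProjection e) (hea : Commute e a) :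
    CFC.abs (a - e) - CFC.abs (a - e) * CFC.abs (a - e) = a - a * a := by
  rw [CFC.abs_mul_abs, (ha.sub he.isSelfAdjoint).star_eq,
    cfcAbs_sub_eq_one_sub_two_mul_mul ha haa he hea,
    one_sub_two_mul_mul_sub he.isIdempotentElem hea, add_sub_cancel_right]

lemma sub_mul_self_le_cfcAbs_sub (ha : IsSelfAdjoint a) (haa : a * a ≤ a)
    (he : IsStarProjection e) (hea : Commute e a) :
    a - a * a ≤ CFC.abs (a - e) := by
  rw [← cfcAbs_sub_sub_mul_self ha haa he hea]
  exact sub_le_self _ (CFC.abs_nonneg _).isSelfAdjoint.mul_self_nonneg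

lemma le_two_mul_sub_mul_self {d : A} (hd : 0 ≤ d) (hd' : 2 * d ≤ 1) :
    d ≤ 2 * (d - d * d) := by
  have hcomm : Commute d (1 - 2 * d) :=
    (Commute.one_right d).sub_right ((Commute.ofNat_right d 2).mul_right (.refl d))
  rw [← sub_nonneg]
  convert hcomm.mul_nonneg hd (sub_nonneg.2 hd') using 1
  noncomm_ring

lemma two_mul_cfcAbs_sub_add_cfcAbs (ha : IsSelfAdjoint a) (haa : a * a ≤ a)
    (he : IsStarProjection e) (hea : Commute e a) (hpos : e * (2 * a - 1) = (2 * a - 1)⁺) :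
    2 * CFC.abs (a - e) + CFC.abs (2 * a - 1) = 1 := by
  have habs : CFC.abs (2 * a - 1) = (1 - 2 * e) * (1 - 2 * a) := by
    rw [eq_sub_of_add_eq (CFC.abs_add_self _ (isSelfAdjoint_two_mul_sub_one ha)), ← hpos]
    noncomm_ring
  calc 2 * CFC.abs (a - e) + CFC.abs (2 * a - 1)
      = 2 * ((1 - 2 * e) * (a - e)) + (1 - 2 * e) * (1 - 2 * a) := by
        rw [habs, cfcAbs_sub_eq_one_sub_two_mul_mul ha haa he hea]
    _ = (1 - 2 * e) * (1 - 2 * e) := by noncomm_ring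
    _ = 1 := one_sub_two_mul_mul_one_sub_two_mul he.isIdempotentElem

lemma cfcAbs_sub_le_two_mul_sub_mul_self (ha : IsSelfAdjoint a) (haa : a * a ≤ a)
    (he : IsStarProjection e) (hea : Commute e a) (hpos : e * (2 * a - 1) = (2 * a - 1)⁺) :
    CFC.abs (a - e) ≤ 2 * (a - a * a) := by
  rw [← cfcAbs_sub_sub_mul_self ha haa he hea]
  refine le_two_mul_sub_mul_self (CFC.abs_nonneg _) ?_
  rw [← two_mul_cfcAbs_sub_add_cfcAbs ha haa he hea hpos]
  exact le_add_of_nonneg_right (CFC.abs_nonneg _)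

end CStarAlgebra

section HilbertSpace

open ContinuousLinearMap

variable {𝕜 E F : Type*} [RCLike 𝕜] [NormedAddCommGroup E] [InnerProductSpace 𝕜 E]
  [NormedAddCommGroup F] [InnerProductSpace 𝕜 F]

lemma hasSum_sq_norm_inner {ι : Type*} (b : HilbertBasis ι 𝕜 E) (x : E) :
    HasSum (fun i => ‖⟪b i, x⟫_𝕜‖ ^ 2) (‖x‖ ^ 2) := by
  have := lp.hasSum_norm (by norm_num) (b.repr x)
  simpa [b.repr_apply_apply] using this

lemma summable_re_inner_of_le {ι : Type*} {A B : E →L[𝕜] E} (hA : 0 ≤ A) (hAB : A ≤ B)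
    (v : ι → E) (hB : Summable fun i => RCLike.re ⟪v i, B (v i)⟫_𝕜) :
    Summable fun i => RCLike.re ⟪v i, A (v i)⟫_𝕜 := by
  refine hB.of_nonneg_of_le
    (fun i => ((nonneg_iff_isPositive A).1 hA).re_inner_nonneg_right (v i)) fun i => ?_
  have := ((le_def A B).1 hAB).re_inner_nonneg_right (v i)
  simpa only [sub_apply, inner_sub_right, map_sub, sub_nonneg] using this

variable [CompleteSpace E]

lemma re_inner_mul_star_self (T : E →L[𝕜] E) (x : E) :
    RCLike.re ⟪x, (T * star T) x⟫_𝕜 = ‖(star T) x‖ ^ 2 := by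
  rw [star_eq_adjoint, apply_norm_sq_eq_inner_adjoint_right, adjoint_adjoint]
  rfl

lemma summable_sq_norm_adjoint [CompleteSpace F] {ι κ : Type*} (b : HilbertBasis ι 𝕜 E)
    (c : HilbertBasis κ 𝕜 F) {T : E →L[𝕜] F} (hT : Summable fun i => ‖T (b i)‖ ^ 2) :
    Summable fun j => ‖(adjoint T) (c j)‖ ^ 2 := by
  have hmatrix : Summable fun ij : ι × κ => ‖⟪c ij.2, T (b ij.1)⟫_𝕜‖ ^ 2 := by
    rw [summable_prod_of_nonneg fun _ => sq_nonneg _]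
    refine ⟨fun i => (hasSum_sq_norm_inner c (T (b i))).summable, ?_⟩
    simpa only [(hasSum_sq_norm_inner c _).tsum_eq] using hT
  obtain ⟨-, hcolumns⟩ := (summable_prod_of_nonneg fun _ => sq_nonneg _).1 hmatrix.prod_symm
  refine hcolumns.congr fun j => ?_
  rw [← (hasSum_sq_norm_inner b _).tsum_eq]
  simp only [Prod.swap_prod_mk, adjoint_inner_right, norm_inner_symm]

lemma exists_isStarProjection_of_mul_eq_zero {u v : E →L[𝕜] E} (hvu : v * u = 0) :
    ∃ e : E →L[𝕜] E, IsStarProjection e ∧ v * e = 0 ∧ e * u = u := by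
  have : CompleteSpace v.ker := v.isClosed_ker.completeSpace_coe
  refine ⟨v.ker.starProjection, isStarProjection_starProjection, ?_, ?_⟩
  · ext x
    exact v.ker.starProjection_apply_mem x
  · ext x
    exact Submodule.starProjection_eq_self_iff.2 (DFunLike.congr_fun hvu x)

variable {H : Type*} [NormedAddCommGroup H] [InnerProductSpace ℂ H] [CompleteSpace H]

lemma isOrthogonalProjection_iff_isStarProjection {e : H →L[ℂ] H} :
    IsOrthogonalProjection e ↔ IsStarProjection e :=
  ⟨fun ⟨hsa, hidem⟩ => ⟨hidem, hsa⟩, fun ⟨hidem, hsa⟩ => ⟨hsa, hidem⟩⟩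

lemma isHilbertSchmidt_iff_summable_re_inner_mul_star {T : H →L[ℂ] H} :
    IsHilbertSchmidt T ↔ ∃ (ι : Type) (b : HilbertBasis ι ℂ H),
      Summable fun i => (⟪b i, (T * star T) (b i)⟫_ℂ).re := by
  refine exists₂_congr fun ι b => ?_
  simp only [← RCLike.re_eq_complex_re, re_inner_mul_star_self]
  exact ⟨summable_sq_norm_adjoint b b, fun h =>
    adjoint_adjoint T ▸ summable_sq_norm_adjoint b b h⟩

lemma exists_isStarProjection_mul_eq_posPart {y : H →L[ℂ] H} (hy : IsSelfAdjoint y) :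
    ∃ e, IsStarProjection e ∧ Commute e y ∧ e * y = y⁺ := by
  obtain ⟨e, he, hneg, hpos⟩ := exists_isStarProjection_of_mul_eq_zero (CFC.negPart_mul_posPart y)
  have hneg' : e * y⁻ = 0 := by
    simpa [he.isSelfAdjoint.star_eq, (CFC.negPart_nonneg y).isSelfAdjoint.star_eq]
      using congrArg star hneg
  have hey : e * y = y⁺ := by
    conv_lhs => rw [← CFC.posPart_sub_negPart y hy, mul_sub, hpos, hneg', sub_zero]
  refine ⟨e, he, (he.isSelfAdjoint.commute_iff hy).2 ?_, hey⟩
  exact hey ▸ (CFC.posPart_nonneg y).isSelfAdjoint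

lemma exists_isStarProjection_cfcAbs_sub_le {a : H →L[ℂ] H} (ha : IsSelfAdjoint a)
    (haa : a * a ≤ a) :
    ∃ e, IsStarProjection e ∧ Commute e a ∧ CFC.abs (a - e) ≤ 2 * (a - a * a) := by
  obtain ⟨e, he, hey, hpos⟩ := exists_isStarProjection_mul_eq_posPart
    (isSelfAdjoint_two_mul_sub_one ha)
  have hea : Commute e a := by
    have hea₂ : Commute e ((2 : ℂ) • a) := by
      simpa [two_smul, two_mul] using hey.add_right (Commute.one_right e)
    simpa using hea₂
  exact ⟨e, he, hea, cfcAbs_sub_le_two_mul_sub_mul_self ha haa he hea hpos⟩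

theorem isHilbertSchmidt_iff_of_mul_star_eq {a T : H →L[ℂ] H} (ha : IsSelfAdjoint a)
    (hT : T * star T = a - a * a) :
    IsHilbertSchmidt T ↔
      ∃ e t : H →L[ℂ] H, IsOrthogonalProjection e ∧ Commute e a ∧ IsTraceClass t ∧ a = e + t := by
  have haa : 0 ≤ a - a * a := hT ▸ mul_star_self_nonneg T
  rw [isHilbertSchmidt_iff_summable_re_inner_mul_star, hT]
  simp only [isOrthogonalProjection_iff_isStarProjection]
  constructor
  · rintro ⟨ι, b, hb⟩
    obtain ⟨e, he, hea, hle⟩ := exists_isStarProjection_cfcAbs_sub_le ha (sub_nonneg.1 haa)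
    refine ⟨e, a - e, he, hea, ⟨ι, b, ?_⟩, (add_sub_cancel e a).symm⟩
    refine summable_re_inner_of_le (CFC.abs_nonneg (a - e)) hle b ?_
    refine (hb.add hb).congr fun i => ?_
    rw [two_mul, add_apply, inner_add_right, map_add, RCLike.re_eq_complex_re]
  · rintro ⟨e, t, he, hea, ⟨ι, b, hb⟩, hat⟩
    obtain rfl : t = a - e := (sub_eq_of_eq_add' hat).symm
    exact ⟨ι, b, summable_re_inner_of_le haa
      (sub_mul_self_le_cfcAbs_sub ha (sub_nonneg.1 haa) he hea) b hb⟩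

theorem hilbertSchmidt_iff_proj_add_traceClass_general
    {p q : H →L[ℂ] H} (hp : IsOrthogonalProjection p) (hq : IsOrthogonalProjection q) :
    IsHilbertSchmidt (q * p * (1 - q)) ↔
      ∃ e t : H →L[ℂ] H, IsOrthogonalProjection e ∧ Commute e (q * p * q) ∧
        IsTraceClass t ∧ q * p * q = e + t := by
  rw [isOrthogonalProjection_iff_isStarProjection] at hp hq
  have hqpq : IsSelfAdjoint (q * p * q) := by
    simpa only [hq.isSelfAdjoint.star_eq] using hp.isSelfAdjoint.conjugate q
  exact isHilbertSchmidt_iff_of_mul_star_eq hqpq (mul_mul_one_sub_mul_star_self hp hq)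

end HilbertSpace

/-- Let `p`, `q` be orthogonal projections on a separable complex Hilbert space `H`.
Then `q p (1 - q)` is Hilbert–Schmidt if and only if `q p q = e + t` for some
orthogonal projection `e` commuting with `q p q` and some trace-class operator `t`. -/
theorem hilbertSchmidt_iff_proj_add_traceClass
    {H : Type*} [NormedAddCommGroup H] [InnerProductSpace ℂ H] [CompleteSpace H]
    [TopologicalSpace.SeparableSpace H]
    (p q : H →L[ℂ] H) (hp : IsOrthogonalProjection p) (hq : IsOrthogonalProjection q) :
    IsHilbertSchmidt (q * p * (1 - q)) ↔
      ∃ e t : H →L[ℂ] H, IsOrthogonalProjection e ∧ Commute e (q * p * q) ∧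
        IsTraceClass t ∧ q * p * q = e + t :=
  hilbertSchmidt_iff_proj_add_traceClass_general hp hq
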